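/- Let n ≥ 1, let P be an n×n nonnegative row sub-stochastic matrix, and let w ∈ ℝ^n with w_i > 0 for all i. Let S_1, …, S_m be the distinct irreducible trapping sets of G_P and T the transient part, and suppose that for each l the restricted matrix P_{S_l S_l} is row-stochastic, with invariant probability vector π^{(l)} ∈ ℝ^{S_l} (π^{(l)} = (P_{S_l S_l})ᵀ π^{(l)}, Σ_{i∈S_l} π^{(l)}_i = 1, π^{(l)}_i > 0). For c ∈ ℝ^n let x̲(c) and x̄(c) denote the minimal and maximal equilibrium of (P, w) with exogenous flow c. Then, for every real p ≥ 1, the supremum over c ∈ ℝ^n of Σ_{i=1}^n |x̄(c)_i − x̲(c)_i|^p is attained (at c = 0) and equals Σ_{l=1}^m ( min_{i∈S_l} (w_i / π^{(l)}_i) )^p · Σ_{i∈S_l} (π^{(l)}_i)^p. -/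

import Mathlib

open Matrix Finset Filter Topology

/-- The saturation function `S_0^w`. -/
def sat {n : ℕ} (w y : Fin n → ℝ) : Fin n → ℝ := fun i => min (max (y i) 0) (w i)

/-- `x` is an equilibrium of the network `(P, w)` with exogenous flow `c`. -/
def IsEquil {n : ℕ} (P : Matrix (Fin n) (Fin n) ℝ) (w c x : Fin n → ℝ) : Prop :=
  x = sat w (Pᵀ.mulVec x + c)

/-- A trapping set of `G_P`: a nonempty set of nodes with no links pointing out of it. -/
def TrapSet {n : ℕ} (P : Matrix (Fin n) (Fin n) ℝ) (S : Finset (Fin n)) : Prop :=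
  S.Nonempty ∧ ∀ i ∈ S, ∀ j ∉ S, P i j = 0

/-- An irreducible trapping set: a trapping set not strictly containing any trapping set. -/
def IrredTrapSet {n : ℕ} (P : Matrix (Fin n) (Fin n) ℝ) (S : Finset (Fin n)) : Prop :=
  TrapSet P S ∧ ∀ S', TrapSet P S' → S' ⊆ S → S' = S

/-!
Saturation is nonexpansive along ordered pairs, so the difference `d` of two ordered equilibria
satisfies `d ≤ d ᵥ* P`; since `P` is sub-stochastic, comparing total masses forces `d ᵥ* P = d`.
A nonnegative invariant vector splits along any trapping set into two invariant vectors, and its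
support is again a trapping set. Hence `d` vanishes on the transient part and on each irreducible
trapping set `S_l` it is a multiple of `π⁽ˡ⁾`, the multiple being at most `min (w / π⁽ˡ⁾)` because
`d ≤ w`. At `c = 0` the sum of these extremal multiples is itself an equilibrium, and so is `0`.
-/

theorem indicator_vecMul_apply_of_notMem {ν R : Type*} [Fintype ν] [NonUnitalNonAssocSemiring R]
    {P : Matrix ν ν R} {d : ν → R} {s : Set ν} (hs : ∀ i ∈ s, ∀ j ∉ s, P i j = 0) {j : ν}
    (hj : j ∉ s) : (s.indicator d ᵥ* P) j = 0 := by
  refine sum_eq_zero fun i _ => ?_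
  by_cases hi : i ∈ s
  · exact mul_eq_zero_of_right _ (hs i hi j hj)
  · rw [Set.indicator_of_notMem hi, zero_mul]

section InvariantVectors

variable {ν R : Type*} [Fintype ν] [Ring R] [LinearOrder R] [IsStrictOrderedRing R]
  {P : Matrix ν ν R} {d : ν → R} {s : Set ν}

theorem vecMul_eq_self_of_le_vecMul (hsub : ∀ i, ∑ j, P i j ≤ 1) (hd : 0 ≤ d)
    (hle : d ≤ d ᵥ* P) : d ᵥ* P = d := by
  have hmass : ∑ j, (d ᵥ* P) j ≤ ∑ j, d j := by
    simp only [vecMul, dotProduct]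
    rw [sum_comm]
    refine sum_le_sum fun i _ => ?_
    rw [← mul_sum]
    exact mul_le_of_le_one_right (hd i) (hsub i)
  have heq := (sum_eq_sum_iff_of_le fun j _ => hle j).1
    ((sum_le_sum fun j _ => hle j).antisymm hmass)
  exact funext fun j => (heq j (mem_univ j)).symm

theorem apply_eq_zero_of_vecMul_eq_self (hP : ∀ i j, 0 ≤ P i j) (hd : 0 ≤ d)
    (hinv : d ᵥ* P = d) {i j : ν} (hi : d i ≠ 0) (hj : d j = 0) : P i j = 0 := by
  have hflow : ∑ k, d k * P k j = 0 := (congrFun hinv j).trans hj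
  have hij := (sum_eq_zero_iff_of_nonneg fun k _ => mul_nonneg (hd k) (hP k j)).1 hflow i
    (mem_univ i)
  exact (mul_eq_zero.1 hij).resolve_left hi

-- `s` sends nothing outside itself, so off `s` the restriction of `d` to `sᶜ` keeps all inflow.
theorem indicator_compl_vecMul_eq_self (hP : ∀ i j, 0 ≤ P i j) (hsub : ∀ i, ∑ j, P i j ≤ 1)
    (hs : ∀ i ∈ s, ∀ j ∉ s, P i j = 0) (hd : 0 ≤ d) (hinv : d ᵥ* P = d) :
    sᶜ.indicator d ᵥ* P = sᶜ.indicator d := by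
  have hnonneg : 0 ≤ sᶜ.indicator d := Set.indicator_nonneg fun i _ => hd i
  refine vecMul_eq_self_of_le_vecMul hsub hnonneg fun j => ?_
  by_cases hj : j ∈ s
  · rw [Set.indicator_of_notMem (Set.notMem_compl_iff.2 hj)]
    exact dotProduct_nonneg_of_nonneg hnonneg fun i => hP i j
  · rw [Set.indicator_compl, sub_vecMul, hinv, Pi.sub_apply, Pi.sub_apply,
      indicator_vecMul_apply_of_notMem hs hj, Set.indicator_of_notMem hj]

theorem indicator_vecMul_eq_self (hP : ∀ i j, 0 ≤ P i j) (hsub : ∀ i, ∑ j, P i j ≤ 1)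
    (hs : ∀ i ∈ s, ∀ j ∉ s, P i j = 0) (hd : 0 ≤ d) (hinv : d ᵥ* P = d) :
    s.indicator d ᵥ* P = s.indicator d := by
  have hcompl := indicator_compl_vecMul_eq_self hP hsub hs hd hinv
  rwa [Set.indicator_compl, sub_vecMul, hinv, sub_right_inj] at hcompl

end InvariantVectors

theorem sum_indicator_apply_of_mem {ι ν M : Type*} [Fintype ι] [AddCommMonoid M]
    {S : ι → Finset ν} (hS : Pairwise fun k l => Disjoint (S k) (S l)) (f : ι → ν → M)
    {l : ι} {i : ν} (hi : i ∈ S l) : ∑ k, (S k : Set ν).indicator (f k) i = f l i := by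
  rw [Fintype.sum_eq_single l fun k hk =>
    Set.indicator_of_notMem (Finset.disjoint_right.1 (hS hk) hi) _]
  exact Set.indicator_of_mem hi _

theorem inf'_div_nonneg {ν R : Type*} [Semifield R] [LinearOrder R] [IsStrictOrderedRing R]
    {A : Finset ν} (hA : A.Nonempty) {w q : ν → R} (hw : ∀ i ∈ A, 0 ≤ w i)
    (hq : ∀ i ∈ A, 0 ≤ q i) : 0 ≤ A.inf' hA fun i => w i / q i :=
  le_inf' _ _ fun i hi => div_nonneg (hw i hi) (hq i hi)

section TrappingSets

variable {n : ℕ} {P : Matrix (Fin n) (Fin n) ℝ} {A B : Finset (Fin n)} {d q w : Fin n → ℝ}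

theorem TrapSet.indicator_vecMul_eq_self_of_block (hA : TrapSet P A)
    (hq : ∀ j ∈ A, q j = ∑ i ∈ A, P i j * q i) :
    (A : Set (Fin n)).indicator q ᵥ* P = (A : Set (Fin n)).indicator q := by
  funext j
  by_cases hj : j ∈ A
  · rw [Set.indicator_of_mem (mem_coe.2 hj), hq j hj]
    simp [vecMul, dotProduct, Set.indicator_apply, mul_comm]
  · rw [Set.indicator_of_notMem (mem_coe.not.2 hj)]
    exact indicator_vecMul_apply_of_notMem hA.2 hj

theorem trapSet_support (hP : ∀ i j, 0 ≤ P i j) (hd : 0 ≤ d) (hinv : d ᵥ* P = d) (hne : d ≠ 0) :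
    TrapSet P {i | d i ≠ 0} := by
  obtain ⟨i, hi⟩ := Function.ne_iff.1 hne
  refine ⟨⟨i, by simpa using hi⟩, fun i hi j hj => ?_⟩
  simp only [mem_filter_univ, not_not] at hi hj
  exact apply_eq_zero_of_vecMul_eq_self hP hd hinv hi hj

theorem irredTrapSet_iff_minimal : IrredTrapSet P A ↔ Minimal (TrapSet P) A :=
  and_congr_right fun _ => forall₂_congr fun _ _ =>
    ⟨fun h hBA => (h hBA).ge, fun h hBA => subset_antisymm hBA (h hBA)⟩

theorem TrapSet.exists_irredTrapSet_subset (hA : TrapSet P A) : ∃ B ⊆ A, IrredTrapSet P B :=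
  let ⟨B, hBA, hB⟩ := exists_minimal_le_of_wellFoundedLT (TrapSet P) A hA
  ⟨B, hBA, irredTrapSet_iff_minimal.2 hB⟩

theorem TrapSet.inter (hA : TrapSet P A) (hB : TrapSet P B) (hAB : (A ∩ B).Nonempty) :
    TrapSet P (A ∩ B) := by
  refine ⟨hAB, fun i hi j hj => ?_⟩
  obtain ⟨hiA, hiB⟩ := mem_inter.1 hi
  by_cases hjA : j ∈ A
  · exact hB.2 i hiB j fun hjB => hj (mem_inter.2 ⟨hjA, hjB⟩)
  · exact hA.2 i hiA j hjA

theorem IrredTrapSet.disjoint (hA : IrredTrapSet P A) (hB : IrredTrapSet P B) (hne : A ≠ B) :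
    Disjoint A B := by
  by_contra h
  have hAB := hA.1.inter hB.1 (not_disjoint_iff_nonempty_inter.1 h)
  exact hne ((hA.2 _ hAB inter_subset_left).symm.trans (hB.2 _ hAB inter_subset_right))

theorem IrredTrapSet.eq_zero_of_vecMul_eq_self (hA : IrredTrapSet P A) (hP : ∀ i j, 0 ≤ P i j)
    (hd : 0 ≤ d) (hinv : d ᵥ* P = d) (hsupp : ∀ i ∉ A, d i = 0) {k : Fin n} (hk : k ∈ A)
    (hdk : d k = 0) : d = 0 := by
  by_contra hne
  have hsub : ({i | d i ≠ 0} : Finset (Fin n)) ⊆ A := fun i hi =>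
    not_imp_comm.1 (hsupp i) ((mem_filter_univ i).1 hi)
  rw [← hA.2 _ (trapSet_support hP hd hinv hne) hsub, mem_filter_univ] at hk
  exact hk hdk

theorem IrredTrapSet.exists_eq_smul (hA : IrredTrapSet P A) (hP : ∀ i j, 0 ≤ P i j)
    (hd : d ᵥ* P = d) (hq : q ᵥ* P = q) (hdsupp : ∀ i ∉ A, d i = 0)
    (hqsupp : ∀ i ∉ A, q i = 0) (hqpos : ∀ i ∈ A, 0 < q i) : ∃ r : ℝ, d = r • q := by
  obtain ⟨k, hk, hmin⟩ := A.exists_min_image (fun i => d i / q i) hA.1.1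
  refine ⟨d k / q k, sub_eq_zero.1 (hA.eq_zero_of_vecMul_eq_self hP (fun i => ?_) ?_ ?_ hk ?_)⟩
  · by_cases hi : i ∈ A
    · exact sub_nonneg.2 ((le_div_iff₀ (hqpos i hi)).1 (hmin i hi))
    · simp [hdsupp i hi, hqsupp i hi]
  · rw [sub_vecMul, smul_vecMul, hd, hq]
  · intro i hi
    simp [hdsupp i hi, hqsupp i hi]
  · simp [div_mul_cancel₀ _ (hqpos k hk).ne']

theorem IrredTrapSet.le_inf'_mul (hA : IrredTrapSet P A) (hP : ∀ i j, 0 ≤ P i j)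
    (hsub : ∀ i, ∑ j, P i j ≤ 1) (hd : 0 ≤ d) (hinv : d ᵥ* P = d) (hdw : ∀ i ∈ A, d i ≤ w i)
    (hq : ∀ j ∈ A, q j = ∑ i ∈ A, P i j * q i) (hqpos : ∀ i ∈ A, 0 < q i) {i : Fin n}
    (hi : i ∈ A) : d i ≤ A.inf' hA.1.1 (fun j => w j / q j) * q i := by
  obtain ⟨r, hr⟩ := hA.exists_eq_smul hP (indicator_vecMul_eq_self hP hsub hA.1.2 hd hinv)
    (hA.1.indicator_vecMul_eq_self_of_block hq) (fun j hj => Set.indicator_of_notMem hj _)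
    (fun j hj => Set.indicator_of_notMem hj _) fun j hj =>
      (hqpos j hj).trans_eq (Set.indicator_of_mem (mem_coe.2 hj) q).symm
  have hdq : ∀ j ∈ A, d j = r * q j := fun j hj => by
    simpa [hj] using congrFun hr j
  rw [hdq i hi]
  refine mul_le_mul_of_nonneg_right (le_inf' _ _ fun j hj => ?_) (hqpos i hi).le
  rw [le_div_iff₀ (hqpos j hj), ← hdq j hj]
  exact hdw j hj

theorem exists_irredTrapSet_mem_of_vecMul_eq_self (hP : ∀ i j, 0 ≤ P i j)
    (hsub : ∀ i, ∑ j, P i j ≤ 1) (hd : 0 ≤ d) (hinv : d ᵥ* P = d) {i : Fin n} (hi : d i ≠ 0) :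
    ∃ A, IrredTrapSet P A ∧ i ∈ A := by
  by_contra htransient
  let s : Set (Fin n) := {k | ∃ A, IrredTrapSet P A ∧ k ∈ A}
  have hs : ∀ k ∈ s, ∀ j ∉ s, P k j = 0 := fun k ⟨A, hA, hk⟩ j hj =>
    hA.1.2 k hk j fun hjA => hj ⟨A, hA, hjA⟩
  have his : i ∈ sᶜ := htransient
  have hne : sᶜ.indicator d ≠ 0 :=
    Function.ne_iff.2 ⟨i, by rwa [Set.indicator_of_mem his, Pi.zero_apply]⟩
  obtain ⟨B, hBsub, hB⟩ := (trapSet_support hP (Set.indicator_nonneg fun k _ => hd k)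
    (indicator_compl_vecMul_eq_self hP hsub hs hd hinv) hne).exists_irredTrapSet_subset
  obtain ⟨k, hk⟩ := hB.1.1
  have hks : k ∉ sᶜ := fun hks => hks ⟨B, hB, hk⟩
  exact (mem_filter_univ k).1 (hBsub hk) (Set.indicator_of_notMem hks d)

end TrappingSets

section Equilibria

variable {n : ℕ} {P : Matrix (Fin n) (Fin n) ℝ} {w c x y : Fin n → ℝ}

theorem sat_sub_sat_le {u v : Fin n → ℝ} {i : Fin n} (h : u i ≤ v i) :
    sat w v i - sat w u i ≤ v i - u i := by
  simp only [sat, min_def, max_def]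
  split_ifs <;> linarith

theorem IsEquil.nonneg (hx : IsEquil P w c x) (hw : 0 ≤ w) : 0 ≤ x := fun i => by
  rw [hx]
  exact le_min (le_max_right _ _) (hw i)

theorem IsEquil.le (hx : IsEquil P w c x) : x ≤ w := fun i => by
  rw [hx]
  exact min_le_right _ _

theorem IsEquil.sub_le (hx : IsEquil P w c x) (hy : IsEquil P w c y) (hw : 0 ≤ w) :
    y - x ≤ w :=
  (sub_le_self y (hx.nonneg hw)).trans hy.le

theorem isEquil_zero_of_vecMul_eq_self (hx : 0 ≤ x) (hxw : x ≤ w) (hinv : x ᵥ* P = x) :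
    IsEquil P w 0 x := by
  funext i
  rw [mulVec_transpose, hinv, add_zero]
  exact ((congrArg (min · (w i)) (max_eq_left (hx i))).trans (min_eq_left (hxw i))).symm

theorem IsEquil.sub_vecMul_eq_self (hx : IsEquil P w c x) (hy : IsEquil P w c y)
    (hP : ∀ i j, 0 ≤ P i j) (hsub : ∀ i, ∑ j, P i j ≤ 1) (hxy : x ≤ y) :
    (y - x) ᵥ* P = y - x := by
  have hd : 0 ≤ y - x := sub_nonneg.2 hxy
  refine vecMul_eq_self_of_le_vecMul hsub hd fun j => ?_
  have hflow : (Pᵀ *ᵥ y + c) j - (Pᵀ *ᵥ x + c) j = ((y - x) ᵥ* P) j := by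
    simp [mulVec_transpose, sub_vecMul]
  have hmono : (Pᵀ *ᵥ x + c) j ≤ (Pᵀ *ᵥ y + c) j := by
    rw [← sub_nonneg, hflow]
    exact dotProduct_nonneg_of_nonneg hd fun i => hP i j
  have hlip := sat_sub_sat_le (w := w) hmono
  rwa [← hx, ← hy, hflow] at hlip

end Equilibria

section MaxJump

variable {ι ν : Type*} [Fintype ι]

/-- The largest possible gap between two ordered equilibria: on `S l` it is the largest multiple
`min (w / π l) • π l` of the invariant vector that stays below `w`, and it vanishes outside the
sets `S l`. Only the values of `π l` on `S l` matter. -/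
noncomputable def maxJump (w : ν → ℝ) (S : ι → Finset ν) (hS : ∀ l, (S l).Nonempty)
    (π : ι → ν → ℝ) : ν → ℝ :=
  ∑ l, (S l).inf' (hS l) (fun i => w i / π l i) • (S l : Set ν).indicator (π l)

variable {w : ν → ℝ} {S : ι → Finset ν} {hS : ∀ l, (S l).Nonempty} {π : ι → ν → ℝ}

theorem maxJump_apply_of_mem (hdisj : Pairwise fun k l => Disjoint (S k) (S l)) {l : ι}
    {i : ν} (hi : i ∈ S l) :
    maxJump w S hS π i = (S l).inf' (hS l) (fun j => w j / π l j) * π l i := by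
  simp only [maxJump, Finset.sum_apply, Pi.smul_apply, ← Set.indicator_const_smul_apply]
  exact sum_indicator_apply_of_mem hdisj _ hi

theorem maxJump_apply_of_forall_notMem {i : ν} (hi : ∀ l, i ∉ S l) :
    maxJump w S hS π i = 0 := by
  simp [maxJump, hi]

theorem maxJump_nonneg (hw : 0 ≤ w) (hπ : ∀ l, ∀ i ∈ S l, 0 ≤ π l i) :
    0 ≤ maxJump w S hS π :=
  sum_nonneg fun l _ => smul_nonneg
    (inf'_div_nonneg (hS l) (fun i _ => hw i) (hπ l)) (Set.indicator_nonneg (hπ l))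

theorem maxJump_le (hw : 0 ≤ w) (hdisj : Pairwise fun k l => Disjoint (S k) (S l))
    (hπ : ∀ l, ∀ i ∈ S l, 0 < π l i) : maxJump w S hS π ≤ w := fun i => by
  by_cases h : ∃ l, i ∈ S l
  · obtain ⟨l, hl⟩ := h
    rw [maxJump_apply_of_mem hdisj hl, ← le_div_iff₀ (hπ l i hl)]
    exact inf'_le _ hl
  · rw [maxJump_apply_of_forall_notMem (not_exists.1 h)]
    exact hw i

theorem sum_maxJump_rpow [Fintype ν] (hw : 0 ≤ w) (hdisj : Pairwise fun k l => Disjoint (S k) (S l))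
    (hπ : ∀ l, ∀ i ∈ S l, 0 ≤ π l i) {p : ℝ} (hp : p ≠ 0) :
    ∑ i, maxJump w S hS π i ^ p =
      ∑ l, (S l).inf' (hS l) (fun i => w i / π l i) ^ p * ∑ i ∈ S l, π l i ^ p := by
  classical
  have hvanish : ∀ i ∉ univ.biUnion S, maxJump w S hS π i ^ p = 0 := fun i hi => by
    rw [maxJump_apply_of_forall_notMem (by simpa using hi), Real.zero_rpow hp]
  rw [← sum_subset (subset_univ (univ.biUnion S)) fun i _ => hvanish i,
    sum_biUnion fun k _ l _ hkl => hdisj hkl]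
  refine sum_congr rfl fun l _ => ?_
  rw [mul_sum]
  refine sum_congr rfl fun i hi => ?_
  rw [maxJump_apply_of_mem hdisj hi, Real.mul_rpow _ (hπ l i hi)]
  exact inf'_div_nonneg (hS l) (fun i _ => hw i) (hπ l)

end MaxJump

section MaxJumpEquilibria

variable {n : ℕ} {ι : Type*} [Fintype ι] {P : Matrix (Fin n) (Fin n) ℝ} {w : Fin n → ℝ}
  {S : ι → Finset (Fin n)} {π : ι → Fin n → ℝ}

theorem maxJump_vecMul_eq_self (hS : ∀ l, TrapSet P (S l))
    (hπ : ∀ l, ∀ j ∈ S l, π l j = ∑ i ∈ S l, P i j * π l i) :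
    maxJump w S (fun l => (hS l).1) π ᵥ* P = maxJump w S (fun l => (hS l).1) π := by
  rw [maxJump, sum_vecMul]
  refine sum_congr rfl fun l _ => ?_
  rw [smul_vecMul, (hS l).indicator_vecMul_eq_self_of_block (hπ l)]

theorem IsEquil.sub_le_maxJump {c x y : Fin n → ℝ} (hx : IsEquil P w c x) (hy : IsEquil P w c y)
    (hxy : x ≤ y) (hP : ∀ i j, 0 ≤ P i j) (hsub : ∀ i, ∑ j, P i j ≤ 1) (hw : 0 ≤ w)
    (hdisj : Pairwise fun k l => Disjoint (S k) (S l)) (hSirr : ∀ l, IrredTrapSet P (S l))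
    (hSall : ∀ A, IrredTrapSet P A → ∃ l, A = S l)
    (hπinv : ∀ l, ∀ j ∈ S l, π l j = ∑ i ∈ S l, P i j * π l i)
    (hπpos : ∀ l, ∀ i ∈ S l, 0 < π l i) :
    y - x ≤ maxJump w S (fun l => (hSirr l).1.1) π := fun i => by
  have hd : 0 ≤ y - x := sub_nonneg.2 hxy
  have hinv := hx.sub_vecMul_eq_self hy hP hsub hxy
  by_cases h : ∃ l, i ∈ S l
  · obtain ⟨l, hl⟩ := h
    rw [maxJump_apply_of_mem hdisj hl]
    exact (hSirr l).le_inf'_mul hP hsub hd hinv (fun j _ => hx.sub_le hy hw j)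
      (hπinv l) (hπpos l) hl
  · rw [maxJump_apply_of_forall_notMem (not_exists.1 h)]
    by_contra hpos
    obtain ⟨A, hA, hiA⟩ :=
      exists_irredTrapSet_mem_of_vecMul_eq_self hP hsub hd hinv fun h0 => hpos h0.le
    obtain ⟨l, rfl⟩ := hSall A hA
    exact h ⟨l, hiA⟩

end MaxJumpEquilibria

theorem max_jump_discontinuity_general
    {n : ℕ} (P : Matrix (Fin n) (Fin n) ℝ)
    (hP : ∀ i j, 0 ≤ P i j) (hsub : ∀ i, ∑ j, P i j ≤ 1)
    (w : Fin n → ℝ) (hw : 0 ≤ w)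
    {ι : Type*} [Fintype ι] (S : ι → Finset (Fin n))
    (hSinj : Function.Injective S)
    (hSirr : ∀ l, IrredTrapSet P (S l))
    (hSall : ∀ A, IrredTrapSet P A → ∃ l, A = S l)
    (π : ι → Fin n → ℝ)
    (hπinv : ∀ l, ∀ j ∈ S l, π l j = ∑ i ∈ S l, P i j * π l i)
    (hπpos : ∀ l, ∀ j ∈ S l, 0 < π l j)
    (xlo xhi : (Fin n → ℝ) → (Fin n → ℝ))
    (hlo : ∀ c, IsLeast {x | IsEquil P w c x} (xlo c))
    (hhi : ∀ c, IsGreatest {x | IsEquil P w c x} (xhi c))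
    (p : ℝ) (hp : 0 < p) :
    (∑ i, |xhi 0 i - xlo 0 i| ^ p =
      ∑ l, ((S l).inf' (hSirr l).1.1 (fun i => w i / π l i)) ^ p *
        ∑ i ∈ S l, π l i ^ p) ∧
    ∀ c : Fin n → ℝ, ∑ i, |xhi c i - xlo c i| ^ p ≤
      ∑ l, ((S l).inf' (hSirr l).1.1 (fun i => w i / π l i)) ^ p *
        ∑ i ∈ S l, π l i ^ p := by
  have hdisj : Pairwise fun k l => Disjoint (S k) (S l) := fun k l hkl =>
    (hSirr k).disjoint (hSirr l) (hSinj.ne hkl)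
  set z := maxJump w S (fun l => (hSirr l).1.1) π
  have hz : 0 ≤ z := maxJump_nonneg hw fun l i hi => (hπpos l i hi).le
  have hgap_nonneg : ∀ c, 0 ≤ xhi c - xlo c := fun c => sub_nonneg.2 ((hlo c).2 (hhi c).1)
  have hgap_le : ∀ c, xhi c - xlo c ≤ z := fun c =>
    (hlo c).1.sub_le_maxJump (hhi c).1 ((hlo c).2 (hhi c).1) hP hsub hw hdisj hSirr hSall
      hπinv hπpos
  have hz_le : z ≤ xhi 0 := (hhi 0).2 (isEquil_zero_of_vecMul_eq_self hz
    (maxJump_le hw hdisj hπpos) (maxJump_vecMul_eq_self (fun l => (hSirr l).1) hπinv))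
  have hlo_le : xlo 0 ≤ 0 := (hlo 0).2 (isEquil_zero_of_vecMul_eq_self le_rfl hw (zero_vecMul P))
  have hgap_zero : xhi 0 - xlo 0 = z :=
    (hgap_le 0).antisymm (hz_le.trans ((le_sub_self_iff _).2 hlo_le))
  rw [← sum_maxJump_rpow hw hdisj (fun l i hi => (hπpos l i hi).le) hp.ne']
  refine ⟨sum_congr rfl fun i _ => ?_, fun c => sum_le_sum fun i _ => ?_⟩
  · rw [← Pi.sub_apply, hgap_zero, abs_of_nonneg (hz i)]
  · rw [← Pi.sub_apply, abs_of_nonneg (hgap_nonneg c i)]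
    exact Real.rpow_le_rpow (hgap_nonneg c i) (hgap_le c i) hp.le

/-- the maximal `p`-th power gap between the maximal and minimal
equilibrium, over all exogenous flows `c`, is attained at `c = 0` and equals
`∑_l (min_{i ∈ S_l} w_i / π⁽ˡ⁾_i)^p ∑_{i ∈ S_l} (π⁽ˡ⁾_i)^p`, where `S_1, …, S_m` are the
irreducible trapping sets and `π⁽ˡ⁾` the invariant probability vector of the block
`P_{S_l S_l}`. -/
theorem max_jump_discontinuity
    {n : ℕ} (hn : 1 ≤ n) (P : Matrix (Fin n) (Fin n) ℝ)
    (hP : ∀ i j, 0 ≤ P i j) (hsub : ∀ i, ∑ j, P i j ≤ 1)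
    (w : Fin n → ℝ) (hw : ∀ i, 0 < w i)
    (m : ℕ) (S : Fin m → Finset (Fin n))
    (hSinj : Function.Injective S)
    (hSirr : ∀ l, IrredTrapSet P (S l))
    (hSall : ∀ S' : Finset (Fin n), IrredTrapSet P S' → ∃ l, S' = S l)
    (hstoc : ∀ l, ∀ i ∈ S l, ∑ j ∈ S l, P i j = 1)
    (π : Fin m → Fin n → ℝ)
    (hπ1 : ∀ l, ∀ j ∈ S l, π l j = ∑ i ∈ S l, P i j * π l i)
    (hπ2 : ∀ l, ∑ j ∈ S l, π l j = 1)
    (hπ3 : ∀ l, ∀ j ∈ S l, 0 < π l j)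
    (xlo xhi : (Fin n → ℝ) → (Fin n → ℝ))
    (hlo : ∀ c, IsEquil P w c (xlo c) ∧ ∀ y, IsEquil P w c y → xlo c ≤ y)
    (hhi : ∀ c, IsEquil P w c (xhi c) ∧ ∀ y, IsEquil P w c y → y ≤ xhi c)
    (p : ℝ) (hp : 1 ≤ p) :
    (∑ i, |xhi 0 i - xlo 0 i| ^ p =
      ∑ l, ((S l).inf' (hSirr l).1.1 (fun i => w i / π l i)) ^ p *
        ∑ i ∈ S l, π l i ^ p) ∧
    ∀ c : Fin n → ℝ, ∑ i, |xhi c i - xlo c i| ^ p ≤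
      ∑ l, ((S l).inf' (hSirr l).1.1 (fun i => w i / π l i)) ^ p *
        ∑ i ∈ S l, π l i ^ p := by
  exact max_jump_discontinuity_general P hP hsub w (fun i => (hw i).le) S hSinj hSirr hSall π hπ1
    hπ3 xlo xhi hlo hhi p (one_pos.trans_le hp)
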